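/- arXiv:2604.04302 — 2 statements merged into one kernel-verified Lean document; each statement's English description precedes it below -/
import Mathlib

section
/- Let f : ℝ^p → [0,∞) be a log-concave, Lebesgue-integrable function, let Q ⊆ ℝ^p be a convex Borel set, and let a ∈ ℝ^p. Then (∫_{Q−a} f(x) dx) · (∫_{Q+a} f(x) dx) ≤ (∫_Q f(x) dx)², where Q−a = {x − a : x ∈ Q} and Q+a = {x + a : x ∈ Q}. -/
/-!
The inequality is the Prékopa–Leindler inequality with parameter `1/2`, applied to the restrictions
of `f` to `Q - a`, `Q + a` and `Q`: if `x ∈ Q - a` and `y ∈ Q + a`, the midpoint of `x` and `y` lies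
in `Q` by convexity, and `f x * f y ≤ f ((x + y) / 2) ^ 2` by log-concavity.

Prékopa–Leindler is proved for `ℝ≥0∞`-valued functions in the form: `F x * G y ≤ H ((x + y) / 2) ^ 2`
for all `x`, `y` implies `(∫ F) * (∫ G) ≤ (∫ H) ^ 2`. In dimension one
(`prekopaLeindler_real`), it follows from the bound `|A| + |B| ≤ |A + B|` applied to superlevel sets,
after truncating and rescaling `F` and `G` to supremum one. Higher dimensions follow by induction
through Tonelli's theorem (`prekopaLeindler_pi`).
-/

open MeasureTheory
open scoped ENNReal

/-- One-dimensional Brunn–Minkowski inequality for the midpoint set. For compact `K` and `L`, the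
translates `K + min L` and `max K + L` both lie in `K + L` and meet in a single point. -/
theorem volume_add_volume_le_two_mul_volume (A B C : Set ℝ) (hA : MeasurableSet A) (hB : MeasurableSet B)
    (hAn : A.Nonempty) (hBn : B.Nonempty) (h : ∀ x ∈ A, ∀ y ∈ B, (x + y) / 2 ∈ C) :
    volume A + volume B ≤ 2 * volume C := by
  have key : ∀ K L : Set ℝ, IsCompact K → IsCompact L → K.Nonempty → L.Nonempty → K ⊆ A → L ⊆ B →
      volume K + volume L ≤ 2 * volume C := by
    intro K L hK hL hKn hLn hKA hLB
    obtain ⟨k, hk, hkmax⟩ := hK.exists_isGreatest hKn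
    obtain ⟨l, hl, hlmin⟩ := hL.exists_isLeast hLn
    have e1 : volume ((fun x => x + -l) ⁻¹' K) = volume K := measure_preimage_add_right _ _ _
    have e2 : volume ((fun x => x + -k) ⁻¹' L) = volume L := measure_preimage_add_right _ _ _
    have hd : AEDisjoint volume ((fun x => x + -l) ⁻¹' K) ((fun x => x + -k) ⁻¹' L) := by
      refine measure_mono_null (t := {k + l}) ?_ (by simp)
      rintro x ⟨h1, h2⟩
      have := hkmax h1
      have := hlmin h2
      simp only [Set.mem_singleton_iff]
      linarith
    have hm : MeasurableSet ((fun x => x + -k) ⁻¹' L) := hL.measurableSet.preimage (by fun_prop)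
    rw [← e1, ← e2, ← measure_union₀ hm.nullMeasurableSet hd]
    have e3 : volume ((fun x : ℝ => (2:ℝ)⁻¹ * x) ⁻¹' C) = 2 * volume C := by
      rw [Real.volume_preimage_mul_left (by norm_num)]
      simp
    rw [← e3]
    apply measure_mono
    rintro x (hx | hx)
    · have := h _ (hKA hx) l (hLB hl)
      simp only [Set.mem_preimage]
      convert this using 1
      ring
    · have := h k (hKA hk) _ (hLB hx)
      simp only [Set.mem_preimage]
      convert this using 1
      ring
  obtain ⟨a, ha⟩ := hAn
  obtain ⟨b, hb⟩ := hBn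
  rw [hA.measure_eq_iSup_isCompact, hB.measure_eq_iSup_isCompact]
  simp only [iSup_and']
  refine ENNReal.biSup_add_biSup_le' ⟨∅, by simp⟩ ⟨∅, by simp⟩ ?_
  rintro K ⟨hKA, hK⟩ L ⟨hLB, hL⟩
  -- The compact subsets may be empty; adjoining a point of `A` and of `B` repairs this.
  refine le_trans (add_le_add (measure_mono (Set.subset_insert a K))
    (measure_mono (Set.subset_insert b L))) ?_
  exact key _ _ (hK.insert a) (hL.insert b) (Set.insert_nonempty _ _) (Set.insert_nonempty _ _)
    (Set.insert_subset ha hKA) (Set.insert_subset hb hLB)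

theorem four_mul_mul_le_add_sq (x y : ℝ≥0∞) : 4 * (x * y) ≤ (x + y) ^ 2 := by
  wlog h : x ≤ y generalizing x y
  · have := this y x (le_of_not_ge h)
    rwa [mul_comm x, add_comm x]
  obtain ⟨d, rfl⟩ := exists_add_of_le h
  calc 4 * (x * (x + d)) ≤ 4 * (x * (x + d)) + d ^ 2 := le_self_add
    _ = _ := by ring

theorem lintegral_eq_lintegral_volume_lt (F : ℝ → ℝ≥0∞) (hF : Measurable F) (h1 : ∀ x, F x ≤ 1) :
    ∫⁻ x, F x = ∫⁻ t in Set.Ioi (0:ℝ), volume {x | t < (F x).toReal} := by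
  rw [← lintegral_eq_lintegral_meas_lt]
  · refine lintegral_congr fun x => (ENNReal.ofReal_toReal ?_).symm
    exact ne_top_of_le_ne_top (by simp) (h1 x)
  · exact Filter.Eventually.of_forall fun x => ENNReal.toReal_nonneg
  · exact hF.ennreal_toReal.aemeasurable

/-- Additive form of the inequality on `ℝ` for functions of supremum one. For `0 < t < 1` the
superlevel sets `{F > t}` and `{G > t}` are nonempty with midpoints in `{H > t}`, so the
Brunn–Minkowski bound can be integrated over `t`. -/
theorem lintegral_add_le_of_iSup_eq_one (F G H : ℝ → ℝ≥0∞) (hF : Measurable F) (hG : Measurable G) (hH : Measurable H)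
    (hF1 : ⨆ x, F x = 1) (hG1 : ⨆ x, G x = 1)
    (h : ∀ x y, F x * G y ≤ H ((x + y) / 2) ^ 2) :
    (∫⁻ x, F x) + (∫⁻ x, G x) ≤ 2 * ∫⁻ x, H x := by
  have hFle : ∀ x, F x ≤ 1 := fun x => hF1 ▸ le_iSup F x
  have hGle : ∀ x, G x ≤ 1 := fun x => hG1 ▸ le_iSup G x
  -- Truncating `H` at one keeps the hypothesis, as `F` and `G` are at most one.
  have hm : Measurable fun x => min (H x) 1 := hH.min measurable_const
  have h' : ∀ x y, (F x).toReal * (G y).toReal ≤ (min (H ((x + y) / 2)) 1).toReal ^ 2 := by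
    intro x y
    rw [← ENNReal.toReal_mul, ← ENNReal.toReal_pow]
    refine ENNReal.toReal_mono (by simp) ?_
    rcases min_choice (H ((x + y) / 2)) 1 with e | e <;> rw [e]
    · exact h x y
    · simpa using mul_le_mul' (hFle x) (hGle y)
  refine le_trans ?_ (mul_le_mul_right (lintegral_mono fun x => min_le_left (H x) 1) 2)
  rw [lintegral_eq_lintegral_volume_lt F hF hFle, lintegral_eq_lintegral_volume_lt G hG hGle, lintegral_eq_lintegral_volume_lt _ hm fun x => min_le_right _ _]
  have anti : ∀ F : ℝ → ℝ≥0∞, Measurable fun t : ℝ => volume {x | t < (F x).toReal} := by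
    intro F
    refine Antitone.measurable fun s t hst => measure_mono fun x (hx : t < _) => lt_of_le_of_lt hst hx
  rw [← lintegral_add_left (anti F), ← lintegral_const_mul _ (anti _)]
  refine setLIntegral_mono ((anti _).const_mul _) fun t ht => ?_
  have ht0 : (0:ℝ) < t := ht
  by_cases ht1 : t < 1
  · have hne : ∀ F : ℝ → ℝ≥0∞, (⨆ x, F x = 1) → {x | t < (F x).toReal}.Nonempty := by
      intro F hF1
      have : ENNReal.ofReal t < ⨆ x, F x := by rw [hF1]; simpa using ht1
      obtain ⟨x, hx⟩ := lt_iSup_iff.1 this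
      refine ⟨x, (ENNReal.ofReal_lt_iff_lt_toReal ht0.le ?_).1 hx⟩
      exact ne_top_of_le_ne_top (by simp) (hF1 ▸ le_iSup F x)
    refine volume_add_volume_le_two_mul_volume _ _ _ (measurableSet_lt measurable_const hF.ennreal_toReal)
      (measurableSet_lt measurable_const hG.ennreal_toReal) (hne F hF1) (hne G hG1) ?_
    intro x hx y hy
    simp only [Set.mem_ofPred_eq] at hx hy ⊢
    have := h' x y
    refine lt_of_pow_lt_pow_left₀ 2 ENNReal.toReal_nonneg (lt_of_lt_of_le ?_ this)
    nlinarith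
  · have hz : ∀ F : ℝ → ℝ≥0∞, (∀ x, F x ≤ 1) → {x | t < (F x).toReal} = ∅ := by
      intro F hF
      ext x
      have := ENNReal.toReal_mono (by simp) (hF x)
      simp at this ⊢
      linarith
    simp [hz F hFle, hz G hGle]

/-- Bounded functions on `ℝ`: rescale both suprema to one, then apply the additive form and
the inequality of arithmetic and geometric means. -/
theorem prekopaLeindler_real_of_bounded (F G H : ℝ → ℝ≥0∞) (hF : Measurable F) (hG : Measurable G) (hH : Measurable H)
    (hF1 : ⨆ x, F x ≠ ⊤) (hG1 : ⨆ x, G x ≠ ⊤)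
    (h : ∀ x y, F x * G y ≤ H ((x + y) / 2) ^ 2) :
    (∫⁻ x, F x) * ∫⁻ x, G x ≤ (∫⁻ x, H x) ^ 2 := by
  set a := ⨆ x, F x with ha
  set b := ⨆ x, G x with hb
  by_cases ha0 : a = 0
  · have : ∀ x, F x = 0 := fun x => le_zero_iff.1 (ha0 ▸ le_iSup F x)
    simp [this]
  by_cases hb0 : b = 0
  · have : ∀ x, G x = 0 := fun x => le_zero_iff.1 (hb0 ▸ le_iSup G x)
    simp [this]
  obtain ⟨c, hc⟩ : ∃ c : ℝ≥0∞, c ^ 2 = a⁻¹ * b⁻¹ := by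
    refine ⟨(a⁻¹ * b⁻¹) ^ (1 / 2 : ℝ), ?_⟩
    rw [← ENNReal.rpow_natCast, ← ENNReal.rpow_mul]
    norm_num
  have key := lintegral_add_le_of_iSup_eq_one (fun x => a⁻¹ * F x) (fun x => b⁻¹ * G x) (fun x => c * H x)
    (hF.const_mul _) (hG.const_mul _) (hH.const_mul _)
    (by rw [← ENNReal.mul_iSup]; exact ENNReal.inv_mul_cancel ha0 hF1)
    (by rw [← ENNReal.mul_iSup]; exact ENNReal.inv_mul_cancel hb0 hG1)
    (fun x y => by
      rw [mul_pow, hc, mul_mul_mul_comm]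
      gcongr
      exact h x y)
  rw [lintegral_const_mul _ hF, lintegral_const_mul _ hG, lintegral_const_mul _ hH] at key
  have k2 := (four_mul_mul_le_add_sq _ _).trans (pow_le_pow_left' key 2)
  have k3 : (4 * (a⁻¹ * b⁻¹)) * ((∫⁻ x, F x) * ∫⁻ x, G x)
      ≤ (4 * (a⁻¹ * b⁻¹)) * (∫⁻ x, H x) ^ 2 := by
    rw [← hc]; rw [mul_mul_mul_comm, ← hc] at k2
    calc _ = _ := by ring
      _ ≤ _ := k2
      _ = _ := by ring
  refine (ENNReal.mul_le_mul_iff_right ?_ ?_).1 k3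
  · simp [hF1, hG1]
  · finiteness

theorem prekopaLeindler_real (F G H : ℝ → ℝ≥0∞) (hF : Measurable F) (hG : Measurable G) (hH : Measurable H)
    (h : ∀ x y, F x * G y ≤ H ((x + y) / 2) ^ 2) :
    (∫⁻ x, F x) * ∫⁻ x, G x ≤ (∫⁻ x, H x) ^ 2 := by
  have tr : ∀ F : ℝ → ℝ≥0∞, Measurable F → ∫⁻ x, F x = ⨆ n : ℕ, ∫⁻ x, min (F x) n := by
    intro F hF
    rw [← lintegral_iSup (fun n => hF.min measurable_const)]
    · refine lintegral_congr fun x => ?_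
      rw [← inf_iSup_eq, ENNReal.iSup_natCast]; simp
    · intro m n hmn x
      dsimp only
      gcongr
  rw [tr F hF, tr G hG, ENNReal.iSup_mul]
  refine iSup_le fun m => ?_
  rw [ENNReal.mul_iSup]
  refine iSup_le fun n => ?_
  have fin : ∀ (F : ℝ → ℝ≥0∞) (n : ℕ), ⨆ x, min (F x) (n : ℝ≥0∞) ≠ ⊤ := fun F n =>
    ne_top_of_le_ne_top (ENNReal.natCast_ne_top n) (iSup_le fun x => min_le_right _ _)
  exact prekopaLeindler_real_of_bounded _ _ H (hF.min measurable_const) (hG.min measurable_const) hH (fin F m) (fin G n)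
    fun x y => (mul_le_mul' (min_le_left _ _) (min_le_left _ _)).trans (h x y)

/-- Induction on the dimension: integrating out the last `n` coordinates preserves the hypothesis
(by the case of dimension `n`), which leaves the one-dimensional inequality. -/
theorem prekopaLeindler_pi (n : ℕ) (F G H : (Fin n → ℝ) → ℝ≥0∞) (hF : Measurable F) (hG : Measurable G)
    (hH : Measurable H) (h : ∀ x y, F x * G y ≤ H ((2⁻¹ : ℝ) • (x + y)) ^ 2) :
    (∫⁻ x, F x) * ∫⁻ x, G x ≤ (∫⁻ x, H x) ^ 2 := by
  induction n with
  | zero =>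
    simp only [lintegral_unique]
    have : volume (Set.univ : Set (Fin 0 → ℝ)) = 1 := by simp [volume_pi]
    rw [this]
    rw [mul_one, mul_one, mul_one]
    exact (h _ _).trans_eq (congrArg (fun z => H z ^ 2) (Subsingleton.elim _ _))
  | succ n ih =>
    let e := (MeasurableEquiv.piFinSuccAbove (fun _ : Fin (n + 1) => ℝ) 0).symm
    have he : MeasurePreserving e := (volume_preserving_piFinSuccAbove (fun _ => ℝ) 0).symm
    have fub : ∀ F : (Fin (n+1) → ℝ) → ℝ≥0∞, Measurable F →
        ∫⁻ x, F x = ∫⁻ t : ℝ, ∫⁻ y : Fin n → ℝ, F (e (t, y)) := by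
      intro F hF
      rw [← he.lintegral_comp hF]
      exact lintegral_prod _ (hF.comp e.measurable).aemeasurable
    have ms : ∀ F : (Fin (n+1) → ℝ) → ℝ≥0∞, Measurable F →
        Measurable fun t : ℝ => ∫⁻ y : Fin n → ℝ, F (e (t, y)) := fun F hF =>
      (hF.comp e.measurable).lintegral_prod_right'
    have mf : ∀ F : (Fin (n+1) → ℝ) → ℝ≥0∞, Measurable F → ∀ t : ℝ,
        Measurable fun y : Fin n → ℝ => F (e (t, y)) := fun F hF t =>
      hF.comp (e.measurable.comp measurable_prodMk_left)
    rw [fub F hF, fub G hG, fub H hH]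
    refine prekopaLeindler_real _ _ _ (ms F hF) (ms G hG) (ms H hH) fun s t => ?_
    refine ih _ _ _ (mf F hF s) (mf G hG t) (mf H hH _) fun x y => ?_
    convert h (e (s, x)) (e (t, y)) using 3
    ext i
    refine Fin.cases ?_ (fun j => ?_) i
    · simp [e, MeasurableEquiv.piFinSuccAbove, Fin.insertNthEquiv]; ring
    · simp [e, MeasurableEquiv.piFinSuccAbove, Fin.insertNthEquiv]; ring

/-- Midpoint Prékopa–Leindler inequality. No measurability of `F` and `G` is needed, since `∫⁻` is
a lower integral; `H` has a measurable majorant that is almost everywhere equal to it. -/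
theorem prekopaLeindler_euclidean {p : ℕ} (F G H : EuclideanSpace ℝ (Fin p) → ℝ≥0∞)
    (hH : AEMeasurable H) (h : ∀ x y, F x * G y ≤ H ((2⁻¹ : ℝ) • (x + y)) ^ 2) :
    (∫⁻ x, F x) * ∫⁻ x, G x ≤ (∫⁻ x, H x) ^ 2 := by
  obtain ⟨F', hF', hFle, hFe⟩ := exists_measurable_le_lintegral_eq volume F
  obtain ⟨G', hG', hGle, hGe⟩ := exists_measurable_le_lintegral_eq volume G
  obtain ⟨H', hH', hHle, hHe⟩ : ∃ H' : EuclideanSpace ℝ (Fin p) → ℝ≥0∞,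
      Measurable H' ∧ (∀ x, H x ≤ H' x) ∧ ∫⁻ x, H x = ∫⁻ x, H' x := by
    classical
    let N := toMeasurable volume {x | H x ≠ hH.mk H x}
    have hN : volume N = 0 := by
      rw [measure_toMeasurable]; exact hH.ae_eq_mk
    refine ⟨N.piecewise (fun _ => ⊤) (hH.mk H), Measurable.piecewise (measurableSet_toMeasurable _ _)
      measurable_const hH.measurable_mk, fun x => ?_, lintegral_congr_ae ?_⟩
    · by_cases hx : x ∈ N
      · simp [hx]
      · have : H x = hH.mk H x := by
          by_contra hne
          exact hx (subset_toMeasurable _ _ hne)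
        simp [hx, this]
    · filter_upwards [hH.ae_eq_mk, measure_eq_zero_iff_ae_notMem.1 hN] with x hx hxN
      simp [hxN, hx]
  rw [hFe, hGe, hHe]
  have hv := PiLp.volume_preserving_toLp (Fin p)
  rw [← hv.lintegral_comp hF', ← hv.lintegral_comp hG', ← hv.lintegral_comp hH']
  refine prekopaLeindler_pi p _ _ _ (hF'.comp hv.measurable) (hG'.comp hv.measurable) (hH'.comp hv.measurable) ?_
  intro x y
  refine (mul_le_mul' (hFle _) (hGle _)).trans ((h _ _).trans (pow_le_pow_left' ?_ 2))
  simpa using hHle _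

/-- The paper's foundational inequality (1): for a log-concave integrable nonnegative
function `f` on `ℝ^p` and a convex Borel set `Q`,
`(∫_{Q-a} f) * (∫_{Q+a} f) ≤ (∫_Q f)^2`. -/
theorem logconcave_shift_integral_inequality {p : ℕ}
    (f : EuclideanSpace ℝ (Fin p) → ℝ)
    (hf_nonneg : ∀ x, 0 ≤ f x)
    (hf_logconcave : ∀ x y : EuclideanSpace ℝ (Fin p), ∀ γ : ℝ, γ ∈ Set.Icc (0 : ℝ) 1 →
      f x ^ γ * f y ^ (1 - γ) ≤ f (γ • x + (1 - γ) • y))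
    (hf_int : Integrable f volume)
    (Q : Set (EuclideanSpace ℝ (Fin p))) (hQ_meas : MeasurableSet Q) (hQ_conv : Convex ℝ Q)
    (a : EuclideanSpace ℝ (Fin p)) :
    (∫ x in (fun x => x - a) '' Q, f x) * (∫ x in (fun x => x + a) '' Q, f x)
      ≤ (∫ x in Q, f x) ^ 2 := by
  have hS : MeasurableSet ((fun x => x - a) '' Q) := by
    simpa [sub_eq_add_neg] using hQ_meas.preimage (measurable_add_const a)
  have hT : MeasurableSet ((fun x => x + a) '' Q) := by
    simpa using hQ_meas.preimage (measurable_add_const (-a))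
  have conv : ∀ S : Set (EuclideanSpace ℝ (Fin p)), MeasurableSet S →
      ENNReal.ofReal (∫ x in S, f x) = ∫⁻ x, S.indicator (fun x => ENNReal.ofReal (f x)) x := by
    intro S hS
    rw [lintegral_indicator hS]
    exact ofReal_integral_eq_lintegral_ofReal hf_int.integrableOn (.of_forall hf_nonneg)
  have nn : ∀ S : Set (EuclideanSpace ℝ (Fin p)), 0 ≤ ∫ x in S, f x := fun S =>
    integral_nonneg hf_nonneg
  rw [← ENNReal.ofReal_le_ofReal_iff (by positivity), ENNReal.ofReal_mul (nn _),
    ENNReal.ofReal_pow (nn _), conv _ hS, conv _ hT, conv _ hQ_meas]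
  refine prekopaLeindler_euclidean _ _ _ (hf_int.aemeasurable.ennreal_ofReal.indicator hQ_meas) fun x y => ?_
  by_cases hx : x ∈ (fun x => x - a) '' Q
  swap
  · rw [Set.indicator_of_notMem hx, zero_mul]; exact zero_le
  by_cases hy : y ∈ (fun x => x + a) '' Q
  swap
  · rw [Set.indicator_of_notMem hy, mul_zero]; exact zero_le
  have hm : (2⁻¹ : ℝ) • (x + y) ∈ Q := by
    obtain ⟨u, hu, rfl⟩ := hx
    obtain ⟨v, hv, rfl⟩ := hy
    have := hQ_conv hu hv (a := 2⁻¹) (b := 2⁻¹) (by norm_num) (by norm_num) (by norm_num)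
    convert this using 1
    rw [← smul_add]; congr 1; simp
  rw [Set.indicator_of_mem hx, Set.indicator_of_mem hy, Set.indicator_of_mem hm,
    ← ENNReal.ofReal_mul (hf_nonneg _), ← ENNReal.ofReal_pow (hf_nonneg _)]
  apply ENNReal.ofReal_le_ofReal
  have := hf_logconcave x y 2⁻¹ ⟨by norm_num, by norm_num⟩
  rw [show (1 - 2⁻¹ : ℝ) = 2⁻¹ by norm_num, ← smul_add,
    ← Real.mul_rpow (hf_nonneg _) (hf_nonneg _)] at this
  have h0 := mul_nonneg (hf_nonneg x) (hf_nonneg y)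
  calc f x * f y = ((f x * f y) ^ (2⁻¹ : ℝ)) ^ 2 := by
        rw [← Real.rpow_natCast, ← Real.rpow_mul h0]; norm_num
    _ ≤ _ := pow_le_pow_left₀ (Real.rpow_nonneg h0 _) this 2
end

section
/- Let μ_1, …, μ_K (K ≥ 2) be distinct points in a Euclidean space ℝ^p, and fix indices k_1 ≠ k_2. Then there exists a point x ∈ ℝ^p such that max(‖x − μ_{k_1}‖, ‖x − μ_{k_2}‖) < ‖x − μ_{k'}‖ for every k' ∉ {k_1, k_2} if and only if there exists a point y ∈ ℝ^p such that ‖y − μ_{k_1}‖ = ‖y − μ_{k_2}‖ and ‖y − μ_{k_1}‖ < ‖y − μ_{k'}‖ for every k' ∉ {k_1, k_2}. -/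
/-!
Starting from `x` with `‖x - a‖ ≤ ‖x - b‖`, walk along the segment towards the farther center `b`.
By the intermediate value theorem some `y` on the segment is equidistant from `a` and `b`. The
ball around `y` through `b` lies inside the ball around `x` through `b`, so a center outside
the latter stays outside the former. No inner product is needed: the argument works in any
real normed space.
-/

/-- On the segment from `x` to `b`, where `b` is at least as far from `x` as `a`, there is a point
`y` equidistant from `a` and `b`, and every `c` farther from `x` than `b` is farther from `y` than
`b`. -/
theorem exists_equidistant_of_le {E : Type*} [NormedAddCommGroup E] [NormedSpace ℝ E]
    (x a b : E) (hab : ‖x - a‖ ≤ ‖x - b‖) :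
    ∃ y : E, ‖y - a‖ = ‖y - b‖ ∧ ∀ c, ‖x - b‖ < ‖x - c‖ → ‖y - b‖ < ‖y - c‖ := by
  have hcont : ContinuousOn
      (fun t : ℝ => ‖x + t • (b - x) - a‖ - ‖x + t • (b - x) - b‖) (Set.Icc 0 1) := by
    fun_prop
  obtain ⟨t, ⟨ht0, ht1⟩, ht⟩ := intermediate_value_Icc zero_le_one hcont
    (show (0 : ℝ) ∈ Set.Icc _ _ by constructor <;> simp [hab])
  refine ⟨x + t • (b - x), sub_eq_zero.mp ht, fun c hc => ?_⟩
  have hyb : ‖x + t • (b - x) - b‖ = (1 - t) * ‖x - b‖ := by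
    rw [show x + t • (b - x) - b = (1 - t) • (x - b) by module, norm_smul,
      Real.norm_of_nonneg (by linarith)]
  have hxy : ‖x - (x + t • (b - x))‖ = t * ‖x - b‖ := by
    rw [show x - (x + t • (b - x)) = t • (x - b) by module, norm_smul, Real.norm_of_nonneg ht0]
  have htri := norm_sub_le_norm_sub_add_norm_sub x (x + t • (b - x)) c
  linarith

/-- "No false positives" claim for Step 2 of CavMerge: the order-2 Voronoi region
`B_{k₁k₂}` (points whose two strictly nearest centers are `μ k₁` and `μ k₂`) is nonempty
if and only if the pair `(k₁, k₂)` shares a nontrivial decision boundary (a point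
equidistant from `μ k₁` and `μ k₂` and strictly closer to them than to all other
centers). -/
theorem order_two_voronoi_nonempty_iff_nontrivial_boundary {p K : ℕ} (hK : 2 ≤ K)
    (μ : Fin K → EuclideanSpace ℝ (Fin p)) (hμ : Function.Injective μ)
    (k₁ k₂ : Fin K) (hk : k₁ ≠ k₂) :
    (∃ x : EuclideanSpace ℝ (Fin p), ∀ k', k' ≠ k₁ → k' ≠ k₂ →
        max ‖x - μ k₁‖ ‖x - μ k₂‖ < ‖x - μ k'‖) ↔
    (∃ y : EuclideanSpace ℝ (Fin p), ‖y - μ k₁‖ = ‖y - μ k₂‖ ∧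
        ∀ k', k' ≠ k₁ → k' ≠ k₂ → ‖y - μ k₁‖ < ‖y - μ k'‖) := by
  constructor
  · rintro ⟨x, hx⟩
    rcases le_total ‖x - μ k₁‖ ‖x - μ k₂‖ with h | h
    · obtain ⟨y, hy, hc⟩ := exists_equidistant_of_le x _ _ h
      exact ⟨y, hy, fun k' h₁ h₂ => hy ▸ hc _ ((le_max_right _ _).trans_lt (hx k' h₁ h₂))⟩
    · obtain ⟨y, hy, hc⟩ := exists_equidistant_of_le x _ _ h
      exact ⟨y, hy.symm, fun k' h₁ h₂ => hc _ ((le_max_left _ _).trans_lt (hx k' h₁ h₂))⟩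
  · rintro ⟨y, hy, h⟩
    exact ⟨y, fun k' h₁ h₂ => max_lt (h k' h₁ h₂) (hy ▸ h k' h₁ h₂)⟩
end
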